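/- Fix p ∈ (0,1) with p ≠ 1/2. There is a constant C > 0 such that for every positive integer k, the function λ ↦ E X̄_k(λ) is differentiable on (0,∞) with (d/dλ) E X̄_k(λ) = λ^{−1} 2^{−k} Σ_{j=0}^{k} binom(k,j) (λ p^j q^{k−j})^2 e^{−λ p^j q^{k−j}}, and this derivative satisfies |(d/dλ) E X̄_k(λ)| ≤ C λ^{−1} k^{−1/2} for all λ > 0. -/

import Mathlib

/-!
Poissonized model for partial fillup in tries (Janson–Szpankowski).

An outcome `ω : ℕ × (ℕ → ℕ → Bool)` consists of the number `ω.1 = N` of inserted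
strings and a source `ω.2` of infinitely many strings, where `ω.2 i j` is the `j`-th
bit of the `i`-th string; the inserted strings are the strings `0, …, N-1`.  Under the
Poissonized measure, `N ~ Po(λ)` is independent of the strings, and all bits are
i.i.d. with `P(bit = 1) = p`.
-/

open MeasureTheory ProbabilityTheory Real Filter

/-- The number of strings among the first `n` (encoded in `ω`) whose first `k` bits
form the word `r ∈ {0,1}^k`. -/
def prefCount (ω : ℕ → ℕ → Bool) (n k : ℕ) (r : Fin k → Bool) : ℕ :=
  ((Finset.range n).filter fun i => ∀ j : Fin k, ω i j = r j).card

/-- `X_k`: the number of words `r ∈ {0,1}^k` that are prefixes of at least two of the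
first `n` strings. -/
def fillCount (ω : ℕ → ℕ → Bool) (n k : ℕ) : ℕ :=
  (Finset.univ.filter fun r : Fin k → Bool => 2 ≤ prefCount ω n k r).card

/-- `ν` is a probability measure on `ℕ → ℕ → Bool` under which all the bits
`ω i j` are i.i.d. with `P(bit = 1) = p` (characterized by cylinder probabilities). -/
def IIDBits (p : ℝ) (ν : Measure (ℕ → ℕ → Bool)) : Prop :=
  IsProbabilityMeasure ν ∧
    ∀ (S : Finset (ℕ × ℕ)) (b : ℕ × ℕ → Bool),
      ν {ω | ∀ s ∈ S, ω s.1 s.2 = b s} =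
        ∏ s ∈ S, ENNReal.ofReal (if b s then p else 1 - p)

/-- The Poissonized model: the number of inserted strings is `Po(λ)`, independent of the
i.i.d. source `ν` of strings. -/
noncomputable def poModel (lam : NNReal) (ν : Measure (ℕ → ℕ → Bool)) :
    Measure (ℕ × (ℕ → ℕ → Bool)) :=
  (ProbabilityTheory.poissonMeasure lam).prod ν

/-- `X_k(λ)` as a random variable on the Poissonized model: the number of words
`r ∈ {0,1}^k` that are prefixes of at least two of the `N` inserted strings. -/
def fillCountPo (k : ℕ) (ω : ℕ × (ℕ → ℕ → Bool)) : ℕ :=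
  fillCount ω.2 ω.1 k

/-- `X̄_k(λ) = X_k(λ) / 2^k`. -/
noncomputable def fracFilledPo (k : ℕ) (ω : ℕ × (ℕ → ℕ → Bool)) : ℝ :=
  (fillCountPo k ω : ℝ) / 2 ^ k

/-!
Thinning the Poisson number of strings, the number that start with a given word `r` is
`Po(λ P(r))`, so `r` is a prefix of at least two of them with probability
`1 - (1 + λ P(r)) e^{-λ P(r)}`.  Words with `j` ones share the same `P(r) = p^j q^{k-j}`, and
differentiating the resulting binomial sum gives the formula.  For the bound, every
`binom(k,j)` is at most `2^k / √k`, and what remains is a sum of `x² e^{-x}` along a geometric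
progression `x` of ratio `p / q ≠ 1`, which is bounded uniformly in `λ` and `k`.
-/

section MiddleBinomial

lemma two_mul_add_one_mul_centralBinom_sq_le (n : ℕ) :
    (2 * n + 1) * n.centralBinom ^ 2 ≤ 16 ^ n := by
  induction n with
  | zero => simp
  | succ n ih =>
    have hratio : (2 * n + 3) * (2 * n + 1) ≤ 4 * (n + 1) ^ 2 := by nlinarith
    refine le_of_mul_le_mul_left ?_ (by positivity : 0 < (n + 1) ^ 2)
    calc (n + 1) ^ 2 * ((2 * (n + 1) + 1) * (n + 1).centralBinom ^ 2)
        = (2 * n + 3) * ((n + 1) * (n + 1).centralBinom) ^ 2 := by ring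
      _ = 4 * ((2 * n + 3) * (2 * n + 1)) * ((2 * n + 1) * n.centralBinom ^ 2) := by
          rw [Nat.succ_mul_centralBinom_succ]; ring
      _ ≤ 4 * (4 * (n + 1) ^ 2) * 16 ^ n := by gcongr
      _ = (n + 1) ^ 2 * 16 ^ (n + 1) := by ring

lemma two_mul_choose_half_eq_centralBinom (n : ℕ) :
    2 * (2 * n + 1).choose n = (n + 1).centralBinom := by
  rw [Nat.centralBinom_eq_two_mul_choose, mul_add_one, Nat.choose_succ_succ' (2 * n + 1) n,
    Nat.choose_symm_half, two_mul]

lemma mul_choose_half_sq_le (k : ℕ) : k * k.choose (k / 2) ^ 2 ≤ 4 ^ k := by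
  obtain ⟨n, rfl | rfl⟩ := k.even_or_odd'
  · calc 2 * n * (2 * n).choose (2 * n / 2) ^ 2
        ≤ (2 * n + 1) * n.centralBinom ^ 2 := by
          rw [Nat.centralBinom_eq_two_mul_choose, Nat.mul_div_cancel_left n two_pos]
          gcongr; lia
      _ ≤ 4 ^ (2 * n) := by
          rw [pow_mul]; exact two_mul_add_one_mul_centralBinom_sq_le n
  · refine le_of_mul_le_mul_left ?_ four_pos
    calc 4 * ((2 * n + 1) * (2 * n + 1).choose ((2 * n + 1) / 2) ^ 2)
        = (2 * n + 1) * (n + 1).centralBinom ^ 2 := by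
          rw [← two_mul_choose_half_eq_centralBinom, show (2 * n + 1) / 2 = n by lia]; ring
      _ ≤ (2 * (n + 1) + 1) * (n + 1).centralBinom ^ 2 := by gcongr; lia
      _ ≤ 16 ^ (n + 1) := two_mul_add_one_mul_centralBinom_sq_le (n + 1)
      _ = 4 * 4 ^ (2 * n + 1) := by rw [← pow_succ', show (16 : ℕ) = 4 ^ 2 by rfl, ← pow_mul]; ring

lemma sqrt_mul_choose_le_two_pow (k j : ℕ) : √k * k.choose j ≤ 2 ^ k := by
  have hmiddle : (k : ℝ) * (k.choose (k / 2) : ℝ) ^ 2 ≤ 4 ^ k := by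
    exact_mod_cast mul_choose_half_sq_le k
  calc √k * k.choose j ≤ √k * k.choose (k / 2) := by gcongr; exact Nat.choose_le_middle j k
    _ ≤ 2 ^ k := by
      refine le_of_sq_le_sq ?_ (by positivity)
      rwa [mul_pow, sq_sqrt k.cast_nonneg, ← pow_mul, mul_comm k, pow_mul,
        show (2 : ℝ) ^ 2 = 4 by norm_num]

lemma sqrt_mul_binomial_average_le {f : ℕ → ℝ} (hf : ∀ j, 0 ≤ f j) (k : ℕ) :
    √k * ((2 ^ k)⁻¹ * ∑ j ∈ Finset.range (k + 1), k.choose j * f j) ≤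
      ∑ j ∈ Finset.range (k + 1), f j := by
  rw [mul_left_comm, inv_mul_le_iff₀ (by positivity), Finset.mul_sum, Finset.mul_sum]
  refine Finset.sum_le_sum fun j _ ↦ ?_
  rw [← mul_assoc]
  exact mul_le_mul_of_nonneg_right (sqrt_mul_choose_le_two_pow k j) (hf j)

end MiddleBinomial

section GeometricSum

lemma mul_one_add_sq_le_six_mul_exp {x : ℝ} (hx : 0 ≤ x) : x * (1 + x) ^ 2 ≤ 6 * exp x := by
  have hexp := sum_le_exp_of_nonneg hx 4
  norm_num [Finset.sum_range_succ, Nat.factorial] at hexp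
  nlinarith

-- The bracket is an increment of the bounded function `t ↦ t / (1 + t)`, so sums telescope.
lemma sq_mul_exp_neg_le_mul_sub {x y : ℝ} (hx : 0 ≤ x) (hxy : x < y) :
    x ^ 2 * exp (-x) ≤ 6 * (y / (y - x)) * (y / (1 + y) - x / (1 + x)) := by
  have hy : 0 < y := hx.trans_lt hxy
  have hdiff : 0 < y - x := sub_pos.2 hxy
  have hmono : x * (1 + y) ≤ y * (1 + x) := by linarith
  calc x ^ 2 * exp (-x) = x ^ 2 / exp x := by rw [exp_neg, div_eq_mul_inv]
    _ ≤ 6 * y / ((1 + y) * (1 + x)) := by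
      rw [div_le_div_iff₀ (exp_pos x) (by positivity)]
      calc x ^ 2 * ((1 + y) * (1 + x)) = x * (1 + x) * (x * (1 + y)) := by ring
        _ ≤ x * (1 + x) * (y * (1 + x)) := by gcongr
        _ = y * (x * (1 + x) ^ 2) := by ring
        _ ≤ y * (6 * exp x) := mul_le_mul_of_nonneg_left (mul_one_add_sq_le_six_mul_exp hx) hy.le
        _ = 6 * y * exp x := by ring
    _ = 6 * (y / (y - x)) * (y / (1 + y) - x / (1 + x)) := by field_simp; ring

lemma sum_sq_mul_exp_neg_geometric_le {a ρ : ℝ} (ha : 0 < a) (hρ : 1 < ρ) (n : ℕ) :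
    ∑ j ∈ Finset.range n, (a * ρ ^ j) ^ 2 * exp (-(a * ρ ^ j)) ≤ 6 * (ρ / (ρ - 1)) := by
  have : 0 < ρ := one_pos.trans hρ
  have hρ₁ : 0 < ρ - 1 := sub_pos.2 hρ
  set g : ℕ → ℝ := fun j ↦ a * ρ ^ j / (1 + a * ρ ^ j)
  have hterm (j : ℕ) :
      (a * ρ ^ j) ^ 2 * exp (-(a * ρ ^ j)) ≤ 6 * (ρ / (ρ - 1)) * (g (j + 1) - g j) := by
    have hstep : a * ρ ^ j < a * ρ ^ (j + 1) := by gcongr; exact j.lt_succ_self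
    have hratio : a * ρ ^ (j + 1) / (a * ρ ^ (j + 1) - a * ρ ^ j) = ρ / (ρ - 1) := by
      rw [pow_succ]; field_simp
    rw [← hratio]
    exact sq_mul_exp_neg_le_mul_sub (by positivity) hstep
  have hg₀ : 0 ≤ g 0 := by positivity
  have hgn : g n ≤ 1 := (div_le_one (by positivity)).2 (by linarith)
  calc ∑ j ∈ Finset.range n, (a * ρ ^ j) ^ 2 * exp (-(a * ρ ^ j))
      ≤ ∑ j ∈ Finset.range n, 6 * (ρ / (ρ - 1)) * (g (j + 1) - g j) :=
        Finset.sum_le_sum fun j _ ↦ hterm j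
    _ = 6 * (ρ / (ρ - 1)) * (g n - g 0) := by rw [← Finset.mul_sum, Finset.sum_range_sub]
    _ ≤ 6 * (ρ / (ρ - 1)) := mul_le_of_le_one_right (by positivity) (by linarith)

lemma sum_sq_mul_exp_neg_le_of_lt {a p q : ℝ} (ha : 0 < a) (hq : 0 < q) (hqp : q < p) (k : ℕ) :
    ∑ j ∈ Finset.range (k + 1), (a * p ^ j * q ^ (k - j)) ^ 2 * exp (-(a * p ^ j * q ^ (k - j))) ≤
      6 * (p / (p - q)) := by
  have hgeom {j : ℕ} (hj : j ≤ k) : a * p ^ j * q ^ (k - j) = a * q ^ k * (p / q) ^ j := by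
    rw [pow_sub₀ q hq.ne' hj, div_pow]; ring
  calc ∑ j ∈ Finset.range (k + 1),
        (a * p ^ j * q ^ (k - j)) ^ 2 * exp (-(a * p ^ j * q ^ (k - j)))
      = ∑ j ∈ Finset.range (k + 1),
          (a * q ^ k * (p / q) ^ j) ^ 2 * exp (-(a * q ^ k * (p / q) ^ j)) :=
        Finset.sum_congr rfl fun j hj ↦ by rw [hgeom (Finset.mem_range_succ_iff.1 hj)]
    _ ≤ 6 * (p / q / (p / q - 1)) :=
        sum_sq_mul_exp_neg_geometric_le (by positivity) ((one_lt_div hq).2 hqp) (k + 1)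
    _ = 6 * (p / (p - q)) := by
        rw [div_sub_one hq.ne', div_div_div_cancel_right₀ hq.ne']

lemma sum_sq_mul_exp_neg_le {a p q : ℝ} (ha : 0 < a) (hp : 0 < p) (hq : 0 < q) (hpq : p ≠ q)
    (k : ℕ) :
    ∑ j ∈ Finset.range (k + 1), (a * p ^ j * q ^ (k - j)) ^ 2 * exp (-(a * p ^ j * q ^ (k - j))) ≤
      6 * (max p q / |p - q|) := by
  obtain hlt | hlt := hpq.lt_or_gt
  · rw [max_eq_right hlt.le, abs_sub_comm, abs_of_pos (sub_pos.2 hlt), ← Finset.sum_flip]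
    refine (Finset.sum_congr rfl fun j hj ↦ ?_).trans_le (sum_sq_mul_exp_neg_le_of_lt ha hp hlt k)
    rw [Nat.sub_sub_self (Finset.mem_range_succ_iff.1 hj), mul_right_comm]
  · rw [max_eq_left hlt.le, abs_of_pos (sub_pos.2 hlt)]
    exact sum_sq_mul_exp_neg_le_of_lt ha hq hlt k

end GeometricSum

section PoissonThinning

open scoped Nat NNReal

variable {ι Ω : Type*} {A : ι → Set Ω}

open scoped Classical in
lemma setOf_filter_mem_eq_eq_biInter {s T : Finset ι} (hT : T ⊆ s) :
    {ω | {i ∈ s | ω ∈ A i} = T} = ⋂ i ∈ s, if i ∈ T then A i else (A i)ᶜ := by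
  ext ω
  simp only [Set.mem_ofPred_eq, Set.mem_iInter, Finset.ext_iff, Finset.mem_filter]
  refine ⟨fun h i hi ↦ ?_, fun h i ↦ ?_⟩
  · split_ifs <;> grind
  · have := h i
    split_ifs at this <;> grind

variable [MeasurableSpace Ω] {μ : Measure Ω}

open scoped Classical in
lemma measurableSet_setOf_filter_mem_eq (hA : ∀ i, MeasurableSet (A i)) {s T : Finset ι}
    (hT : T ⊆ s) : MeasurableSet {ω | {i ∈ s | ω ∈ A i} = T} := by
  rw [setOf_filter_mem_eq_eq_biInter hT]
  refine Finset.measurableSet_biInter s fun i _ ↦ ?_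
  split_ifs
  exacts [hA i, (hA i).compl]

open scoped Classical in
lemma measurable_card_filter_mem (hA : ∀ i, MeasurableSet (A i)) (s : Finset ι) :
    Measurable fun ω ↦ ({i ∈ s | ω ∈ A i}).card := by
  simp_rw [Finset.card_filter]
  exact Finset.measurable_fun_sum _ fun i _ ↦
    Measurable.ite (hA i) measurable_const measurable_const

open scoped Classical in
lemma measureReal_setOf_filter_mem_eq (hindep : iIndepSet A μ) (hA : ∀ i, MeasurableSet (A i))
    {s T : Finset ι} (hT : T ⊆ s) :
    μ.real {ω | {i ∈ s | ω ∈ A i} = T} =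
      (∏ i ∈ T, μ.real (A i)) * ∏ i ∈ s \ T, (1 - μ.real (A i)) := by
  have := hindep.isProbabilityMeasure
  have hgen (i : ι) (_ : i ∈ s) :
      MeasurableSet[MeasurableSpace.generateFrom {A i}] (if i ∈ T then A i else (A i)ᶜ) := by
    have hAi : MeasurableSet[MeasurableSpace.generateFrom {A i}] (A i) :=
      MeasurableSpace.measurableSet_generateFrom rfl
    split_ifs
    exacts [hAi, hAi.compl]
  rw [setOf_filter_mem_eq_eq_biInter hT, measureReal_def,
    ((iIndepSet_iff_iIndep A μ).1 hindep).meas_biInter hgen, ENNReal.toReal_prod,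
    ← Finset.prod_sdiff hT, mul_comm]
  congr 1
  · exact Finset.prod_congr rfl fun i hi ↦ by rw [if_pos hi, measureReal_def]
  · refine Finset.prod_congr rfl fun i hi ↦ ?_
    rw [if_neg (Finset.mem_sdiff.1 hi).2, ← measureReal_def, probReal_compl_eq_one_sub (hA i)]

open scoped Classical in
lemma measureReal_setOf_card_filter_mem_eq (hindep : iIndepSet A μ)
    (hA : ∀ i, MeasurableSet (A i)) {θ : ℝ} (hθ : ∀ i, μ.real (A i) = θ) (s : Finset ι) (m : ℕ) :
    μ.real {ω | ({i ∈ s | ω ∈ A i}).card = m} =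
      s.card.choose m * θ ^ m * (1 - θ) ^ (s.card - m) := by
  have := hindep.isProbabilityMeasure
  have hunion : {ω | ({i ∈ s | ω ∈ A i}).card = m} =
      ⋃ T ∈ s.powersetCard m, {ω | {i ∈ s | ω ∈ A i} = T} := by
    ext ω
    simp [Finset.mem_powersetCard]
  have hdisj : (s.powersetCard m : Set (Finset ι)).PairwiseDisjoint
      fun T ↦ {ω | {i ∈ s | ω ∈ A i} = T} := fun T _ T' _ hne ↦
    Set.disjoint_left.2 fun ω hT hT' ↦ hne (Eq.trans (Eq.symm hT) hT')
  have hterm {T : Finset ι} (hT : T ∈ s.powersetCard m) :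
      μ.real {ω | {i ∈ s | ω ∈ A i} = T} = θ ^ m * (1 - θ) ^ (s.card - m) := by
    obtain ⟨hTs, rfl⟩ := Finset.mem_powersetCard.1 hT
    simp only [measureReal_setOf_filter_mem_eq hindep hA hTs, hθ, Finset.prod_const,
      Finset.card_sdiff_of_subset hTs]
  rw [hunion, measureReal_biUnion_finset hdisj fun T hT ↦
      measurableSet_setOf_filter_mem_eq hA (Finset.mem_powersetCard.1 hT).1,
    Finset.sum_congr rfl fun T hT ↦ hterm hT, Finset.sum_const, Finset.card_powersetCard,
    nsmul_eq_mul, mul_assoc]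

lemma hasSum_poisson_mul_binomial (l θ : ℝ) (m : ℕ) :
    HasSum (fun n : ℕ ↦ exp (-l) * l ^ n / n ! * (n.choose m * θ ^ m * (1 - θ) ^ (n - m)))
      (exp (-(l * θ)) * (l * θ) ^ m / m !) := by
  have hexp : HasSum (fun n : ℕ ↦ (l * (1 - θ)) ^ n / n !) (exp (l * (1 - θ))) := by
    rw [exp_eq_exp_ℝ]
    exact NormedSpace.expSeries_div_hasSum_exp _
  rw [← hasSum_nat_add_iff' m, Finset.sum_eq_zero fun n hn ↦ by
    simp [Nat.choose_eq_zero_of_lt (Finset.mem_range.1 hn)], sub_zero]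
  convert! hexp.mul_left (exp (-l) * (l * θ) ^ m / m !) using 1
  · funext n
    have hfact : ((n + m).choose m : ℝ) * n ! * m ! = (n + m)! := by
      exact_mod_cast n.add_choose_mul_factorial_mul_factorial m
    rw [Nat.add_sub_cancel, ← hfact]
    have hchoose : ((n + m).choose m : ℝ) ≠ 0 := by
      exact_mod_cast (Nat.choose_pos (Nat.le_add_left m n)).ne'
    rw [mul_pow l (1 - θ), mul_pow, pow_add]
    field_simp
  · rw [show -(l * θ) = -l + l * (1 - θ) by ring, exp_add]
    ring

lemma hasSum_poissonMeasure_prod_real [IsFiniteMeasure μ] (r : ℝ≥0) {S : Set (ℕ × Ω)}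
    (hS : MeasurableSet S) :
    HasSum (fun n ↦ exp (-r) * r ^ n / n ! * μ.real (Prod.mk n ⁻¹' S))
      (((poissonMeasure r).prod μ).real S) := by
  have hint : Integrable (S.indicator 1) ((poissonMeasure r).prod μ) :=
    (integrable_const (1 : ℝ)).indicator hS
  have hsection (n : ℕ) : ∫ ω, S.indicator 1 (n, ω) ∂μ = μ.real (Prod.mk n ⁻¹' S) :=
    integral_indicator_one (measurable_prodMk_left hS)
  rw [← integral_indicator_one hS, integral_prod _ hint]
  simpa only [hsection, smul_eq_mul] using hasSum_integral_poissonMeasure hint.integral_prod_left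

open scoped Classical in
lemma hasLaw_card_filter_range_poissonMeasure {A : ℕ → Set Ω} (hindep : iIndepSet A μ)
    (hA : ∀ i, MeasurableSet (A i)) {θ : ℝ≥0} (hθ : ∀ i, μ (A i) = θ) (r : ℝ≥0) :
    HasLaw (fun ω : ℕ × Ω ↦ ({i ∈ Finset.range ω.1 | ω.2 ∈ A i}).card) (poissonMeasure (r * θ))
      ((poissonMeasure r).prod μ) := by
  have := hindep.isProbabilityMeasure
  have hmeas : Measurable fun ω : ℕ × Ω ↦ ({i ∈ Finset.range ω.1 | ω.2 ∈ A i}).card :=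
    measurable_from_prod_countable_right fun n ↦ measurable_card_filter_mem hA (Finset.range n)
  have hcond (n m : ℕ) : μ.real {ω | ({i ∈ Finset.range n | ω ∈ A i}).card = m} =
      n.choose m * (θ : ℝ) ^ m * (1 - θ) ^ (n - m) := by
    have hθ_real (i : ℕ) : μ.real (A i) = θ := by rw [measureReal_def, hθ, ENNReal.coe_toReal]
    rw [measureReal_setOf_card_filter_mem_eq hindep hA hθ_real, Finset.card_range]
  have := Measure.isProbabilityMeasure_map (μ := (poissonMeasure r).prod μ) hmeas.aemeasurable
  refine ⟨hmeas.aemeasurable, Measure.ext_of_measureReal_singleton fun m ↦ ?_⟩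
  rw [map_measureReal_apply hmeas (measurableSet_singleton m), poissonMeasure_real_singleton,
    NNReal.coe_mul]
  refine (hasSum_poissonMeasure_prod_real r (hmeas (measurableSet_singleton m))).unique ?_
  exact (hasSum_poisson_mul_binomial r θ m).congr_fun fun n ↦ congrArg _ (hcond n m)

lemma poissonMeasure_real_Ici_two (r : ℝ≥0) :
    (poissonMeasure r).real (Set.Ici 2) = 1 - (1 + r) * exp (-r) := by
  have hcompl : Set.Ici 2 = (({0, 1} : Finset ℕ) : Set ℕ)ᶜ := by
    ext n
    simp only [Set.mem_Ici, Finset.coe_pair, Set.mem_compl_iff, Set.mem_insert_iff,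
      Set.mem_singleton_iff]
    lia
  rw [hcompl, probReal_compl_eq_one_sub (Finset.measurableSet _), ← sum_measureReal_singleton,
    Finset.sum_pair zero_ne_one, poissonMeasure_real_singleton, poissonMeasure_real_singleton]
  simp only [pow_zero, pow_one, Nat.factorial_zero, Nat.factorial_one, Nat.cast_one]
  ring

end PoissonThinning

lemma sum_apply_prod_ite {ι M N : Type*} [Fintype ι] [DecidableEq ι] [CommMonoid M]
    [AddCommMonoid N] (a b : M) (f : M → N) :
    ∑ r : ι → Bool, f (∏ i, if r i then a else b) =
      ∑ j ∈ Finset.range (Fintype.card ι + 1),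
        (Fintype.card ι).choose j • f (a ^ j * b ^ (Fintype.card ι - j)) := by
  rw [← Finset.card_univ, ← Finset.sum_powerset_apply_card fun j ↦
    f (a ^ j * b ^ ((Finset.univ : Finset ι).card - j))]
  refine Finset.sum_bij' (fun r _ ↦ ({i | r i} : Finset ι)) (fun s _ i ↦ decide (i ∈ s))
    (by simp) (by simp) (by simp) (by simp) fun r _ ↦ ?_
  rw [Finset.prod_ite, Finset.prod_const, Finset.prod_const,
    ← Finset.card_filter_add_card_filter_not (s := Finset.univ) fun i ↦ r i,
    Nat.add_sub_cancel_left]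

lemma hasDerivAt_one_sub_one_add_mul_mul_exp_neg (θ x : ℝ) :
    HasDerivAt (fun l ↦ 1 - (1 + l * θ) * exp (-(l * θ))) (x * θ ^ 2 * exp (-(x * θ))) x := by
  have hlin : HasDerivAt (fun l : ℝ ↦ l * θ) θ x := hasDerivAt_mul_const θ
  refine (((hlin.const_add 1).mul hlin.neg.exp).const_sub 1).congr_deriv ?_
  simp only [Pi.neg_apply]
  ring

section Trie

variable {k : ℕ}

/-- The event that string `i` starts with the word `r`. -/
def prefixSet (r : Fin k → Bool) (i : ℕ) : Set (ℕ → ℕ → Bool) :=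
  {ω | ∀ j : Fin k, ω i j = r j}

/-- The probability `P(r) = ∏ⱼ P(rⱼ)` that a random string starts with the word `r`, as a
nonnegative real so that `λ P(r)` can be the rate of a Poisson law. -/
noncomputable def wordProb (p : ℝ) (r : Fin k → Bool) : NNReal :=
  ∏ j, if r j then p.toNNReal else (1 - p).toNNReal

lemma measurableSet_prefixSet (r : Fin k → Bool) (i : ℕ) : MeasurableSet (prefixSet r i) := by
  have hinter : prefixSet r i = ⋂ j : Fin k, {ω | ω i j = r j} := Set.ofPred_forall _
  have heval (j : ℕ) : Measurable fun ω : ℕ → ℕ → Bool ↦ ω i j := by fun_prop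
  rw [hinter]
  exact .iInter fun j ↦ heval j (measurableSet_singleton (r j))

open scoped Classical in
lemma prefCount_eq_card_filter_mem_prefixSet (ω : ℕ → ℕ → Bool) (n : ℕ) (r : Fin k → Bool) :
    prefCount ω n k r = ({i ∈ Finset.range n | ω ∈ prefixSet r i}).card := by
  simp only [prefCount, prefixSet, Set.mem_ofPred_eq]
  congr

lemma measurableSet_two_le_prefCount (r : Fin k → Bool) :
    MeasurableSet {ω : ℕ × (ℕ → ℕ → Bool) | 2 ≤ prefCount ω.2 ω.1 k r} := by
  have hmeas : Measurable fun ω : ℕ × (ℕ → ℕ → Bool) ↦ prefCount ω.2 ω.1 k r := by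
    simp only [prefCount_eq_card_filter_mem_prefixSet]
    exact measurable_from_prod_countable_right fun n ↦
      measurable_card_filter_mem (measurableSet_prefixSet r) (Finset.range n)
  exact hmeas measurableSet_Ici

lemma fracFilledPo_eq_sum_indicator (k : ℕ) (ω : ℕ × (ℕ → ℕ → Bool)) :
    fracFilledPo k ω =
      (2 ^ k)⁻¹ * ∑ r : Fin k → Bool, {ω | 2 ≤ prefCount ω.2 ω.1 k r}.indicator 1 ω := by
  classical
  simp only [fracFilledPo, fillCountPo, fillCount, Finset.card_filter, div_eq_inv_mul,
    Nat.cast_sum, Set.indicator_apply, Set.mem_ofPred_eq, Pi.one_apply, Nat.cast_ite, Nat.cast_one,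
    Nat.cast_zero]

namespace IIDBits

variable {p : ℝ} {ν : Measure (ℕ → ℕ → Bool)}

lemma mem_Icc (hν : IIDBits p ν) : p ∈ Set.Icc 0 1 := by
  have := hν.1
  have hbit (b : Bool) : (if b then p else 1 - p) ≤ 1 := by
    have hcylinder := hν.2 {(0, 0)} fun _ ↦ b
    rw [Finset.prod_singleton] at hcylinder
    exact ENNReal.ofReal_le_one.1 (hcylinder ▸ prob_le_one)
  exact ⟨(sub_le_self_iff 1).1 (hbit false), hbit true⟩

lemma measure_biInter_prefixSet (hν : IIDBits p ν) (r : Fin k → Bool) (s : Finset ℕ) :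
    ν (⋂ i ∈ s, prefixSet r i) = ∏ _i ∈ s, (wordProb p r : ENNReal) := by
  set b : ℕ × ℕ → Bool := fun x ↦ if h : x.2 < k then r ⟨x.2, h⟩ else true with hb
  have hcylinder : {ω : ℕ → ℕ → Bool | ∀ x ∈ s ×ˢ Finset.range k, ω x.1 x.2 = b x} =
      ⋂ i ∈ s, prefixSet r i := by
    ext ω
    simp only [prefixSet, Set.mem_ofPred_eq, Set.mem_iInter, Finset.mem_product, Finset.mem_range]
    refine ⟨fun h i hi j ↦ ?_, fun h x hx ↦ ?_⟩
    · simpa [hb] using h (i, j) ⟨hi, j.2⟩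
    · simpa [hb, hx.2] using h x.1 hx.1 ⟨x.2, hx.2⟩
  rw [← hcylinder, hν.2, Finset.prod_product]
  refine Finset.prod_congr rfl fun i _ ↦ ?_
  rw [Finset.prod_range, wordProb, ENNReal.ofNNReal_finsetProd]
  exact Finset.prod_congr rfl fun j _ ↦ by cases h : r j <;> simp [hb, h, ENNReal.ofReal]

lemma measure_prefixSet (hν : IIDBits p ν) (r : Fin k → Bool) (i : ℕ) :
    ν (prefixSet r i) = wordProb p r := by
  simpa using hν.measure_biInter_prefixSet r {i}

lemma iIndepSet_prefixSet (hν : IIDBits p ν) (r : Fin k → Bool) : iIndepSet (prefixSet r) ν := by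
  refine (iIndepSet_iff_meas_biInter (measurableSet_prefixSet r)).2 fun s ↦ ?_
  simp only [hν.measure_biInter_prefixSet, hν.measure_prefixSet]

lemma hasLaw_prefCount (hν : IIDBits p ν) (r : Fin k → Bool) (lam : NNReal) :
    HasLaw (fun ω ↦ prefCount ω.2 ω.1 k r) (poissonMeasure (lam * wordProb p r))
      (poModel lam ν) := by
  simp only [prefCount_eq_card_filter_mem_prefixSet]
  exact hasLaw_card_filter_range_poissonMeasure (hν.iIndepSet_prefixSet r)
    (measurableSet_prefixSet r) (hν.measure_prefixSet r) lam

lemma poModel_real_two_le_prefCount (hν : IIDBits p ν) (r : Fin k → Bool) (lam : NNReal) :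
    (poModel lam ν).real {ω | 2 ≤ prefCount ω.2 ω.1 k r} =
      1 - (1 + lam * wordProb p r) * exp (-(lam * wordProb p r)) := by
  have hlaw := (hν.hasLaw_prefCount r lam).measureReal_eq (measurableSet_Ici (a := 2))
  rwa [← NNReal.coe_mul, ← poissonMeasure_real_Ici_two]

lemma integral_fracFilledPo (hν : IIDBits p ν) (k : ℕ) (lam : NNReal) :
    ∫ ω, fracFilledPo k ω ∂poModel lam ν =
      (2 ^ k)⁻¹ * ∑ j ∈ Finset.range (k + 1), k.choose j *
        (1 - (1 + lam * (p ^ j * (1 - p) ^ (k - j))) *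
          exp (-(lam * (p ^ j * (1 - p) ^ (k - j))))) := by
  have := hν.1
  have : IsProbabilityMeasure (poModel lam ν) := by unfold poModel; infer_instance
  obtain ⟨hp₀, hp₁⟩ := hν.mem_Icc
  have hsum := sum_apply_prod_ite (ι := Fin k) p.toNNReal (1 - p).toNNReal
    fun θ ↦ 1 - (1 + (lam : ℝ) * θ) * exp (-(lam * θ))
  simp only [Fintype.card_fin, nsmul_eq_mul, NNReal.coe_mul, NNReal.coe_pow,
    coe_toNNReal p hp₀, coe_toNNReal (1 - p) (sub_nonneg.2 hp₁)] at hsum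
  have hint (r : Fin k → Bool) :
      Integrable ({ω | 2 ≤ prefCount ω.2 ω.1 k r}.indicator 1) (poModel lam ν) :=
    (integrable_const (1 : ℝ)).indicator (measurableSet_two_le_prefCount r)
  simp_rw [fracFilledPo_eq_sum_indicator]
  rw [integral_const_mul, integral_finsetSum _ fun r _ ↦ hint r, ← hsum]
  congr! 2 with r
  rw [integral_indicator_one (measurableSet_two_le_prefCount r),
    hν.poModel_real_two_le_prefCount, wordProb]

lemma hasDerivAt_integral_fracFilledPo (hν : IIDBits p ν) (k : ℕ) {lam : ℝ} (hlam : 0 < lam) :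
    HasDerivAt (fun l : ℝ ↦ ∫ ω, fracFilledPo k ω ∂poModel l.toNNReal ν)
      (lam⁻¹ * ((2 : ℝ) ^ k)⁻¹ * ∑ j ∈ Finset.range (k + 1),
        (k.choose j : ℝ) * (lam * p ^ j * (1 - p) ^ (k - j)) ^ 2 *
          exp (-(lam * p ^ j * (1 - p) ^ (k - j)))) lam := by
  have hsum := (HasDerivAt.fun_sum (u := Finset.range (k + 1)) fun j _ ↦
    (hasDerivAt_one_sub_one_add_mul_mul_exp_neg (p ^ j * (1 - p) ^ (k - j)) lam).const_mul
      (k.choose j : ℝ)).const_mul ((2 : ℝ) ^ k)⁻¹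
  refine (hsum.congr_of_eventuallyEq ?_).congr_deriv ?_
  · filter_upwards [lt_mem_nhds hlam] with l hl
    rw [hν.integral_fracFilledPo, coe_toNNReal l hl.le]
  · simp only [Finset.mul_sum]
    refine Finset.sum_congr rfl fun j _ ↦ ?_
    rw [mul_assoc lam]
    field_simp

end IIDBits

end Trie

/-- Lemma 3 of Janson–Szpankowski: for `p ≠ 1/2`, the map `λ ↦ E X̄_k(λ)` is
differentiable with derivative
`λ⁻¹ 2^{-k} Σ_j C(k,j) (λ p^j q^{k-j})² e^{-λ p^j q^{k-j}}`, which is `O(λ⁻¹ k^{-1/2})`. -/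
theorem deriv_expectation_fracFilledPo
    (p q : ℝ) (hp : 0 < p) (hp1 : p < 1) (hp2 : p ≠ 1 / 2) (hq : q = 1 - p)
    (ν : Measure (ℕ → ℕ → Bool)) (hν : IIDBits p ν) :
    ∃ C > (0 : ℝ), ∀ k : ℕ, 1 ≤ k → ∀ lam : ℝ, 0 < lam →
      HasDerivAt
          (fun l : ℝ => ∫ ω, fracFilledPo k ω ∂poModel l.toNNReal ν)
          (lam⁻¹ * ((2 : ℝ) ^ k)⁻¹ *
            ∑ j ∈ Finset.range (k + 1),
              (k.choose j : ℝ) * (lam * p ^ j * q ^ (k - j)) ^ 2 *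
                Real.exp (-(lam * p ^ j * q ^ (k - j))))
          lam ∧
        |lam⁻¹ * ((2 : ℝ) ^ k)⁻¹ *
            ∑ j ∈ Finset.range (k + 1),
              (k.choose j : ℝ) * (lam * p ^ j * q ^ (k - j)) ^ 2 *
                Real.exp (-(lam * p ^ j * q ^ (k - j)))| ≤
          C * lam⁻¹ / Real.sqrt k := by
  subst hq
  have hq : 0 < 1 - p := sub_pos.2 hp1
  have hpq : p ≠ 1 - p := fun h ↦ hp2 (by linarith)
  have : 0 < |p - (1 - p)| := abs_pos.2 (sub_ne_zero.2 hpq)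
  refine ⟨6 * (max p (1 - p) / |p - (1 - p)|), by positivity, fun k hk lam hlam ↦
    ⟨hν.hasDerivAt_integral_fracFilledPo k hlam, ?_⟩⟩
  have hk₀ : 0 < √k := sqrt_pos.2 (by exact_mod_cast hk)
  have hbound := (sqrt_mul_binomial_average_le (fun j ↦ by positivity) k).trans
    (sum_sq_mul_exp_neg_le hlam hp hq hpq k)
  simp only [mul_assoc (Nat.cast _ : ℝ)]
  rw [abs_of_nonneg (by positivity), le_div_iff₀ hk₀]
  linear_combination lam⁻¹ * hbound
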